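/- If the edge-probability function satisfies p(n) ≥ ln n / n and t = t(n) is a function with t(n) ≤ n·p(n)/100, then with high probability a graph G sampled from G(n,p) contains no non-empty path of length (number of edges) at most 2·ln n/(3·ln ln n) whose two (possibly identical) endpoints both lie in D_t(G); in particular, w.h.p. every two distinct vertices of D_t(G) are at distance greater than 2·ln n/(3·ln ln n) in G and no vertex of D_t(G) lies on a cycle of length at most 2·ln n/(3·ln ln n). -/

import Mathlib

open Filter Finset SimpleGraph
open scoped Classical

/-- The probability weight of a particular graph `G` on `[n]` under `G(n,p)`. -/
noncomputable def gnpWeight (n : ℕ) (p : ℝ) (G : SimpleGraph (Fin n)) : ℝ :=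
  p ^ G.edgeFinset.card * (1 - p) ^ (n.choose 2 - G.edgeFinset.card)

/-- The probability that a random graph `G ~ G(n,p)` satisfies the predicate `A`. -/
noncomputable def gnpProb (n : ℕ) (p : ℝ) (A : SimpleGraph (Fin n) → Prop) : ℝ :=
  ∑ G : SimpleGraph (Fin n), if A G then gnpWeight n p G else 0

/-- A sequence of graph properties holds with high probability in `G(n, p n)`. -/
def WHP (p : ℕ → ℝ) (A : ∀ n : ℕ, SimpleGraph (Fin n) → Prop) : Prop :=
  Tendsto (fun n => gnpProb n (p n) (A n)) atTop (nhds 1)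

/-- Number of edges of a graph. -/
noncomputable def edgeCount {V : Type*} [Fintype V] (G : SimpleGraph V) : ℕ :=
  G.edgeFinset.card

/-- Number of edges with both endpoints in `U`. -/
noncomputable def eIn {V : Type*} [Fintype V] (G : SimpleGraph V) (U : Finset V) : ℕ :=
  (G.edgeFinset.filter (fun e => ∀ v ∈ e, v ∈ U)).card

/-- Number of edges with one endpoint in `U` and the other in `Z` (for disjoint `U`, `Z`). -/
noncomputable def eBetween {V : Type*} [Fintype V] (G : SimpleGraph V) (U Z : Finset V) : ℕ :=
  ((U ×ˢ Z).filter (fun q => G.Adj q.1 q.2)).card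

/-- External neighbourhood of a vertex set. -/
noncomputable def extNbhd {V : Type*} [Fintype V] (G : SimpleGraph V) (U : Finset V) : Finset V :=
  Finset.univ.filter (fun v => v ∉ U ∧ ∃ u ∈ U, G.Adj u v)

/-- `G` is an `(R, f)`-expander: every set `U` with `|U| ≤ R` satisfies `|N(U)| ≥ f(|U|)·|U|`. -/
def IsExpander {V : Type*} [Fintype V] (G : SimpleGraph V) (R : ℝ) (f : ℕ → ℝ) : Prop :=
  ∀ U : Finset V, U.Nonempty → (U.card : ℝ) ≤ R →
    f U.card * U.card ≤ ((extNbhd G U).card : ℝ)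

/-- The expansion function `f_β` on `{1, …, ⌊β n₁⌋}`. -/
noncomputable def fBeta (β : ℝ) (n1 : ℕ) (t : ℕ) : ℝ :=
  if t = Nat.floor (β * n1) then 2 * (1 + 39 * β) / (3 * β)
  else if (t : ℝ) < (n1 : ℝ) ^ (0.1 : ℝ) then Real.log n1 ^ (0.8 : ℝ)
  else 11

/-- `G₁` is `(n₁, d, β)`-quasi-random. -/
def QuasiRandom {V : Type*} [Fintype V] (G1 : SimpleGraph V) (n1 : ℕ) (d β : ℝ) : Prop :=
  (∀ v : V, d / 150 ≤ (G1.degree v : ℝ)) ∧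
  (∀ U : Finset V, (U.card : ℝ) < (n1 : ℝ) ^ (0.11 : ℝ) * Real.log n1 →
    (eIn G1 U : ℝ) ≤ d ^ (0.13 : ℝ) * U.card) ∧
  (∀ U : Finset V, (U.card : ℝ) < 12 * β * n1 →
    (eIn G1 U : ℝ) ≤ 50 * β * d * U.card) ∧
  (∀ U Z : Finset V, Disjoint U Z → U.card = Nat.floor (β * n1) →
    Z.card = Nat.floor ((1 / 3 - 27 * β) * n1) →
    (n1 : ℝ) * Real.log (Real.log n1) ≤ (eBetween G1 U Z : ℝ))

/-- Longest path length in `G`. -/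
noncomputable def longestPath {V : Type*} [Fintype V] (G : SimpleGraph V) : ℕ :=
  sSup {l : ℕ | ∃ (u v : V) (q : G.Walk u v), q.IsPath ∧ q.length = l}

/-- `{u, v}` is a booster with respect to `Γ`. -/
def IsBooster {V : Type*} [Fintype V] (Γ : SimpleGraph V) (u v : V) : Prop :=
  u ≠ v ∧ ¬ Γ.Adj u v ∧
    ((Γ ⊔ fromEdgeSet {s(u, v)}).IsHamiltonian ∨
      longestPath Γ < longestPath (Γ ⊔ fromEdgeSet {s(u, v)}))

/-- The booster set `B_Γ(v)`. -/
noncomputable def boosterSet {V : Type*} [Fintype V] (Γ : SimpleGraph V) (v : V) : Finset V :=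
  Finset.univ.filter (fun w => IsBooster Γ v w)

/-- Membership in the family `𝓛(n, β)` with witnessing partition `V = V₁ ∪ D`. -/
def InFamilyL (n : ℕ) (β : ℝ) (G : SimpleGraph (Fin n)) (V1 D : Finset (Fin n)) : Prop :=
  Disjoint V1 D ∧ V1 ∪ D = Finset.univ ∧
  ((D.card : ℝ) ≤ (n : ℝ) ^ (0.09 : ℝ)) ∧
  (∀ u ∈ D, 2 ≤ (G.neighborFinset u ∩ V1).card) ∧
  (∀ u ∈ D, ∀ v ∈ D, ∀ q : G.Walk u v, q.IsPath → 0 < q.length →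
    2 * Real.log n / (3 * Real.log (Real.log n)) < (q.length : ℝ)) ∧
  (∀ u ∈ D, ∀ q : G.Walk u u, q.IsCycle →
    2 * Real.log n / (3 * Real.log (Real.log n)) < (q.length : ℝ)) ∧
  IsExpander (G.induce (V1 : Set (Fin n))) (β * V1.card) (fBeta β V1.card)

/-- The set `D_t(G)` of vertices of degree less than `t`. -/
noncomputable def lowDegSet (n : ℕ) (t : ℝ) (G : SimpleGraph (Fin n)) : Finset (Fin n) :=
  Finset.univ.filter (fun v => (G.degree v : ℝ) < t)

/-!
Paths and cycles are trails, so it suffices to exclude short trails with both endpoints `u, v` of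
degree at most `d / 100`, where `d = n p ≥ log n`. Given that the `k` edges of such a trail are
present, the endpoints can only have small degree if few of the remaining pairs between `{u, v}`
and its complement are edges; these are independent of the trail, and exponential Markov bounds
the conditional probability by `exp (-0.9 d)` for each of the endpoints. Since at most `n ^ (k + 1)`
walks are open and at most `n ^ k` are closed, the expected number of such trails of length `k` is
at most `d ^ k * (exp (-0.9 d) + n * exp (-1.8 d))`: the second endpoint of an open trail pays for
the extra factor `n`. As `x / log x` is increasing for `x ≥ e`, the bound
`k ≤ 2 log n / (3 log log n)` gives `k ≤ 2 d / (3 log d)`, that is `d ^ k ≤ exp (2 d / 3)`, and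
the expectation summed over all such `k` is at most `2 log n * n ^ (-2 / 15)`.
-/

open MeasureTheory ProbabilityTheory unitInterval

section BinomialRandomGraph

variable {V : Type*}

instance [Countable V] : MeasurableSingletonClass (SimpleGraph V) where
  measurableSet_singleton G := by
    rw [← measurableEmbedding_edgeSet.measurableSet_image, Set.image_singleton]
    exact measurableSet_singleton _

variable [Fintype V]

lemma sum_simpleGraph_eq_sum_powerset {M : Type*} [AddCommMonoid M] (f : SimpleGraph V → M) :
    ∑ G, f G = ∑ A ∈ (⊤ : SimpleGraph V).edgeFinset.powerset, f (fromEdgeSet A) := by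
  refine sum_bij' (fun G _ ↦ G.edgeFinset) (fun A _ ↦ fromEdgeSet A)
    (fun G _ ↦ mem_powerset.2 (edgeFinset_mono le_top)) (fun _ _ ↦ mem_univ _)
    (fun G _ ↦ by simp) (fun A hA ↦ ?_) (fun G _ ↦ by simp)
  have hdiag : ∀ e ∈ A, ¬ e.IsDiag := fun e he ↦
    not_isDiag_of_mem_edgeSet _ (mem_edgeFinset.1 (mem_powerset.1 hA he))
  rw [← coe_inj, coe_edgeFinset, edgeSet_fromEdgeSet, sdiff_eq_left, Set.disjoint_left]
  exact hdiag

lemma binomialRandom_real_singleton (p : I) (G : SimpleGraph V) :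
    G(V, p).real {G} =
      ∏ e ∈ (⊤ : SimpleGraph V).edgeFinset, if e ∈ G.edgeSet then (p : ℝ) else 1 - p := by
  have hmem : ({e ∈ (⊤ : SimpleGraph V).edgeFinset | e ∈ G.edgeSet}) = G.edgeFinset := by
    ext e
    simpa using fun he ↦ not_isDiag_of_mem_edgeSet G he
  have hsplit := card_filter_add_card_filter_not (s := (⊤ : SimpleGraph V).edgeFinset)
    (· ∈ G.edgeSet)
  rw [hmem, card_edgeFinset_top_eq_card_choose_two] at hsplit
  rw [prod_ite, prod_const, prod_const, hmem, measureReal_def, binomialRandom_singleton,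
    Set.ncard_eq_toFinset_card', Nat.card_eq_fintype_card, ← hsplit]
  simp [edgeFinset]

lemma integral_binomialRandom_prod (p : I) (a b : Sym2 V → ℝ) :
    ∫ G, ∏ e ∈ (⊤ : SimpleGraph V).edgeFinset, (if e ∈ G.edgeSet then a e else b e) ∂G(V, p) =
      ∏ e ∈ (⊤ : SimpleGraph V).edgeFinset, (p * a e + (1 - p) * b e) := by
  rw [integral_fintype .of_finite, prod_add, sum_simpleGraph_eq_sum_powerset]
  refine sum_congr rfl fun A hA ↦ ?_
  rw [mem_powerset] at hA
  simp only [binomialRandom_real_singleton, smul_eq_mul]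
  rw [← prod_mul_distrib, ← prod_sdiff hA, mul_comm]
  have hmem : ∀ e ∈ (⊤ : SimpleGraph V).edgeFinset,
      (e ∈ (fromEdgeSet (A : Set (Sym2 V))).edgeSet ↔ e ∈ A) := by
    intro e he
    simpa using fun _ ↦ not_isDiag_of_mem_edgeSet _ (mem_edgeFinset.1 he)
  congr 1
  · exact prod_congr rfl fun e he ↦ by simp only [if_pos ((hmem e (hA he)).2 he)]
  · refine prod_congr rfl fun e he ↦ ?_
    rw [Finset.mem_sdiff] at he
    simp only [if_neg (mt (hmem e he.1).1 he.2)]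

lemma integral_binomialRandom_pow_card_filter (p : I) {S T : Finset (Sym2 V)}
    (hS : S ⊆ (⊤ : SimpleGraph V).edgeFinset) (hT : T ⊆ (⊤ : SimpleGraph V).edgeFinset)
    (hST : Disjoint S T) (z : ℝ) :
    ∫ G, (if ↑S ⊆ G.edgeSet then z ^ #{e ∈ T | e ∈ G.edgeSet} else 0) ∂G(V, p) =
      (p : ℝ) ^ #S * (p * z + (1 - p)) ^ #T := by
  have hprod : ∀ G : SimpleGraph V, (if ↑S ⊆ G.edgeSet then z ^ #{e ∈ T | e ∈ G.edgeSet} else 0) =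
      ∏ e ∈ (⊤ : SimpleGraph V).edgeFinset,
        if e ∈ G.edgeSet then (if e ∈ T then z else 1) else (if e ∈ S then 0 else 1) := by
    intro G
    split_ifs with hSG
    · calc z ^ #{e ∈ T | e ∈ G.edgeSet}
        _ = ∏ e ∈ T, if e ∈ G.edgeSet then z else 1 := by simp [prod_ite]
        _ = ∏ e ∈ (⊤ : SimpleGraph V).edgeFinset,
              if e ∈ T then (if e ∈ G.edgeSet then z else 1) else 1 := by
          rw [prod_ite_mem, inter_eq_right.2 hT]
        _ = _ := prod_congr rfl fun e _ ↦ by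
          have : e ∈ S → e ∈ G.edgeSet := fun he ↦ hSG he
          split_ifs <;> tauto
    · obtain ⟨e, heS, heG⟩ := Set.not_subset.1 hSG
      exact (prod_eq_zero (hS heS) (by rw [if_neg heG, if_pos (mem_coe.1 heS)])).symm
  simp only [hprod, integral_binomialRandom_prod]
  calc ∏ e ∈ (⊤ : SimpleGraph V).edgeFinset,
        ((p : ℝ) * (if e ∈ T then z else 1) + (1 - p) * (if e ∈ S then 0 else 1))
    _ = ∏ e ∈ (⊤ : SimpleGraph V).edgeFinset,
          (if e ∈ S then (p : ℝ) else 1) * (if e ∈ T then p * z + (1 - p) else 1) :=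
        prod_congr rfl fun e _ ↦ by
          have : e ∈ S → e ∉ T := fun h ↦ Finset.disjoint_left.1 hST h
          split_ifs <;> first | (exfalso; tauto) | ring
    _ = (p : ℝ) ^ #S * (p * z + (1 - p)) ^ #T := by
        rw [prod_mul_distrib, prod_ite_mem, prod_ite_mem, inter_eq_right.2 hS,
          inter_eq_right.2 hT, prod_const, prod_const]

lemma binomialRandom_real_subset_and_card_filter_le (p : I) {S T : Finset (Sym2 V)}
    (hS : S ⊆ (⊤ : SimpleGraph V).edgeFinset) (hT : T ⊆ (⊤ : SimpleGraph V).edgeFinset)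
    (hST : Disjoint S T) {r : ℝ} (hr : 0 ≤ r) (m : ℝ) :
    G(V, p).real {G | ↑S ⊆ G.edgeSet ∧ (#{e ∈ T | e ∈ G.edgeSet} : ℝ) ≤ m} ≤
      (p : ℝ) ^ #S * Real.exp (r * m - p * (1 - Real.exp (-r)) * #T) := by
  have hp : 0 ≤ (p : ℝ) * Real.exp (-r) + (1 - p) :=
    add_nonneg (mul_nonneg p.2.1 (Real.exp_pos _).le) (sub_nonneg.2 p.2.2)
  have hmarkov : ∀ G : SimpleGraph V,
      Set.indicator {G | ↑S ⊆ G.edgeSet ∧ (#{e ∈ T | e ∈ G.edgeSet} : ℝ) ≤ m} 1 G ≤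
        Real.exp (r * m) *
          if ↑S ⊆ G.edgeSet then Real.exp (-r) ^ #{e ∈ T | e ∈ G.edgeSet} else 0 := by
    intro G
    by_cases hG : G ∈ {G : SimpleGraph V | ↑S ⊆ G.edgeSet ∧ (#{e ∈ T | e ∈ G.edgeSet} : ℝ) ≤ m}
    swap
    · rw [Set.indicator_of_notMem hG]
      positivity
    rw [Set.indicator_of_mem hG, if_pos hG.1, ← Real.exp_nat_mul, ← Real.exp_add, Pi.one_apply,
      Real.one_le_exp_iff]
    linarith [mul_le_mul_of_nonneg_left hG.2 hr]
  calc G(V, p).real {G | ↑S ⊆ G.edgeSet ∧ (#{e ∈ T | e ∈ G.edgeSet} : ℝ) ≤ m}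
    _ ≤ ∫ G, Real.exp (r * m) *
          (if ↑S ⊆ G.edgeSet then Real.exp (-r) ^ #{e ∈ T | e ∈ G.edgeSet} else 0) ∂G(V, p) := by
      rw [← integral_indicator_one (Set.toFinite _).measurableSet]
      exact integral_mono .of_finite .of_finite hmarkov
    _ = (p : ℝ) ^ #S * (Real.exp (r * m) * (p * Real.exp (-r) + (1 - p)) ^ #T) := by
      rw [integral_const_mul, integral_binomialRandom_pow_card_filter p hS hT hST]
      ring
    _ ≤ (p : ℝ) ^ #S * (Real.exp (r * m) * Real.exp (-(p * (1 - Real.exp (-r)))) ^ #T) := by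
      have hp0 := p.2.1
      gcongr
      linarith [Real.add_one_le_exp (-(p * (1 - Real.exp (-r))))]
    _ = (p : ℝ) ^ #S * Real.exp (r * m - p * (1 - Real.exp (-r)) * #T) := by
      rw [← Real.exp_nat_mul, ← Real.exp_add]
      congr 2
      ring

end BinomialRandomGraph

section LowDegree

variable {V : Type*} [Fintype V]

/-- The pairs of vertices (edges of the complete graph) with exactly one element in `U`. They carry
at most `∑ u ∈ U, G.degree u` edges of a graph `G`, and unlike the pairs meeting `U` they are
counted by a product. -/
noncomputable def cutPairs (U : Finset V) : Finset (Sym2 V) :=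
  (U ×ˢ Uᶜ).image fun x ↦ s(x.1, x.2)

lemma cutPairs_subset (U : Finset V) : cutPairs U ⊆ (⊤ : SimpleGraph V).edgeFinset := by
  simp only [cutPairs, image_subset_iff, mem_product, mem_compl, mem_edgeFinset, mem_edgeSet,
    top_adj]
  rintro ⟨u, v⟩ ⟨hu, hv⟩ (rfl : u = v)
  exact hv hu

lemma card_cutPairs (U : Finset V) : #(cutPairs U) = #U * #Uᶜ := by
  rw [cutPairs, card_image_of_injOn, card_product]
  rintro ⟨u, v⟩ huv ⟨u', v'⟩ huv' h
  simp only [coe_product, Set.mem_prod, mem_coe, mem_compl] at huv huv'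
  simp only [Sym2.eq_iff] at h
  grind

lemma card_filter_cutPairs_le (U : Finset V) (G : SimpleGraph V) :
    #{e ∈ cutPairs U | e ∈ G.edgeSet} ≤ ∑ u ∈ U, G.degree u := by
  have hsub : {e ∈ cutPairs U | e ∈ G.edgeSet} ⊆ U.biUnion fun u ↦ G.incidenceFinset u := by
    intro e he
    simp only [cutPairs, mem_filter, mem_image, mem_product, Prod.exists] at he
    obtain ⟨⟨u, v, ⟨hu, -⟩, rfl⟩, he⟩ := he
    rw [mem_biUnion]
    exact ⟨u, hu, by rw [mem_incidenceFinset]; exact ⟨he, Sym2.mem_mk_left u v⟩⟩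
  calc #{e ∈ cutPairs U | e ∈ G.edgeSet}
    _ ≤ ∑ u ∈ U, #(G.incidenceFinset u) := (card_le_card hsub).trans card_biUnion_le
    _ = ∑ u ∈ U, G.degree u := sum_congr rfl fun u _ ↦ G.card_incidenceFinset_eq_degree u

lemma binomialRandom_real_subset_and_degree_le (p : I) {S : Finset (Sym2 V)}
    (hS : S ⊆ (⊤ : SimpleGraph V).edgeFinset) (U : Finset V) {r : ℝ} (hr : 0 ≤ r) (m : ℝ) :
    G(V, p).real {G | ↑S ⊆ G.edgeSet ∧ ∀ u ∈ U, (G.degree u : ℝ) ≤ m} ≤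
      (p : ℝ) ^ #S *
        Real.exp (r * (#U * m) - p * (1 - Real.exp (-r)) * (#U * #Uᶜ - #S)) := by
  have hsub : {G : SimpleGraph V | ↑S ⊆ G.edgeSet ∧ ∀ u ∈ U, (G.degree u : ℝ) ≤ m} ⊆
      {G | ↑S ⊆ G.edgeSet ∧ (#{e ∈ cutPairs U \ S | e ∈ G.edgeSet} : ℝ) ≤ #U * m} := by
    refine fun G hG ↦ ⟨hG.1, ?_⟩
    calc (#{e ∈ cutPairs U \ S | e ∈ G.edgeSet} : ℝ)
      _ ≤ #{e ∈ cutPairs U | e ∈ G.edgeSet} := by gcongr; exact sdiff_subset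
      _ ≤ ∑ u ∈ U, (G.degree u : ℝ) := by exact_mod_cast card_filter_cutPairs_le U G
      _ ≤ #U * m := by simpa using sum_le_card_nsmul U _ m hG.2
  have hcard : (#U * #Uᶜ - #S : ℝ) ≤ #(cutPairs U \ S) := by
    rw [sub_le_iff_le_add, ← Nat.cast_mul, ← card_cutPairs]
    exact_mod_cast (card_le_card_sdiff_add_card (s := cutPairs U) (t := S))
  have hr' : 0 ≤ 1 - Real.exp (-r) := by simpa using hr
  refine (measureReal_mono hsub).trans <| (binomialRandom_real_subset_and_card_filter_le p hS
    (sdiff_subset.trans (cutPairs_subset U)) disjoint_sdiff hr _).trans ?_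
  have hp := p.2.1
  gcongr

lemma exp_neg_three_le : Real.exp (-3) ≤ 1 / 20 := by
  rw [Real.exp_neg, inv_le_comm₀ (Real.exp_pos 3) (by norm_num),
    show Real.exp 3 = Real.exp 1 ^ 3 by rw [← Real.exp_nat_mul]; norm_num]
  calc ((1 / 20 : ℝ))⁻¹ ≤ 2.7182818283 ^ 3 := by norm_num
    _ ≤ Real.exp 1 ^ 3 := by gcongr; exact Real.exp_one_gt_d9.le

lemma binomialRandom_real_trail_and_degree_le (p : I) {u v : V}
    {w : (⊤ : SimpleGraph V).Walk u v} (hw : w.IsTrail)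
    (hlen : (w.length : ℝ) + 2 ≤ Fintype.card V / 50) :
    G(V, p).real {G | (∀ e ∈ w.edges, e ∈ G.edgeSet) ∧
        ∀ x ∈ ({u, v} : Finset V), (G.degree x : ℝ) ≤ Fintype.card V * p / 100} ≤
      (p : ℝ) ^ w.length * Real.exp (-(9 / 10 * (Fintype.card V * p))) ^ #{u, v} := by
  set N : ℝ := (Fintype.card V : ℝ)
  set U : Finset V := {u, v}
  have hS : w.edges.toFinset ⊆ (⊤ : SimpleGraph V).edgeFinset := fun e he ↦
    mem_edgeFinset.2 (w.edges_subset_edgeSet (List.mem_toFinset.1 he))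
  have hS_card : #w.edges.toFinset = w.length := by
    rw [List.toFinset_card_of_nodup hw.edges_nodup, Walk.length_edges]
  have hU_pos : (1 : ℝ) ≤ #U := by exact_mod_cast card_pos.2 (insert_nonempty u {v})
  have hU_le : (#U : ℝ) ≤ 2 := by exact_mod_cast card_le_two
  have hUc : (#Uᶜ : ℝ) = N - #U := by rw [card_compl, Nat.cast_sub (card_le_univ U)]
  have hpairs : 49 / 50 * (#U * N) ≤ #U * #Uᶜ - w.length := by
    rw [hUc]
    nlinarith
  have hbound := binomialRandom_real_subset_and_degree_le p hS U (r := 3) (by norm_num)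
    (N * p / 100)
  simp only [List.coe_toFinset, Set.ofPred_subset, hS_card] at hbound
  refine hbound.trans ?_
  have hp := p.2.1
  rw [← Real.exp_nat_mul]
  gcongr
  -- The exponent is at most `(0.03 - 0.95 * 0.98) * #U * N * p ≤ -0.9 * #U * N * p`.
  have hmul : 19 / 20 * (49 / 50 * (#U * N)) ≤ (1 - Real.exp (-3)) * (#U * #Uᶜ - w.length) :=
    mul_le_mul (by linarith [exp_neg_three_le]) hpairs (by positivity)
      (by linarith [exp_neg_three_le])
  have hnonneg : 0 ≤ #U * N * p := by positivity
  linarith [mul_le_mul_of_nonneg_left hmul hp]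

lemma card_finsetWalkLength_succ_le (G : SimpleGraph V) [G.LocallyFinite] (k : ℕ) (u v : V) :
    #(G.finsetWalkLength (k + 1) u v) ≤ Fintype.card V ^ k := by
  induction k generalizing u with
  | zero =>
    rw [pow_zero, card_le_one]
    simp only [mem_finsetWalkLength_iff]
    rintro (_ | ⟨_, _ | _⟩) h (_ | ⟨_, _ | _⟩) h' <;> simp_all
  | succ k ih =>
    rw [finsetWalkLength]
    calc _ ≤ ∑ w : G.neighborSet u, #(G.finsetWalkLength (k + 1) w v) := by
          refine card_biUnion_le.trans_eq (sum_congr rfl fun w _ ↦ card_map _)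
      _ ≤ Fintype.card (G.neighborSet u) * Fintype.card V ^ k := by
          simpa using sum_le_card_nsmul univ _ _ fun (w : G.neighborSet u) _ ↦ ih w
      _ ≤ Fintype.card V ^ (k + 1) := by
          rw [pow_succ']
          gcongr
          exact Fintype.card_subtype_le _

lemma sum_pow_card_pair_le (x : ℝ) :
    ∑ u : V, ∑ v : V, x ^ #{u, v} ≤ Fintype.card V * (x + Fintype.card V * x ^ 2) := by
  have hpair : ∀ u v : V, x ^ #{u, v} ≤ (if u = v then x else 0) + x ^ 2 := by
    intro u v
    split_ifs with huv
    · simpa [huv] using sq_nonneg x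
    · simp [card_pair huv]
  calc ∑ u : V, ∑ v : V, x ^ #{u, v}
    _ ≤ ∑ u : V, ∑ v : V, ((if u = v then x else 0) + x ^ 2) := by gcongr; exact hpair _ _
    _ = Fintype.card V * (x + Fintype.card V * x ^ 2) := by
      simp [sum_add_distrib, mul_add]

/-- `G` contains a trail with `k` edges whose endpoints have degree at most `m`. Paths and cycles
through a vertex are both trails, and so are treated together. -/
def HasLowDegreeTrail (G : SimpleGraph V) (k : ℕ) (m : ℝ) : Prop :=
  ∃ (u v : V) (q : G.Walk u v), q.IsTrail ∧ q.length = k ∧ (G.degree u : ℝ) ≤ m ∧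
    (G.degree v : ℝ) ≤ m

lemma HasLowDegreeTrail.exists_top_walk {G : SimpleGraph V} {k : ℕ} {m : ℝ}
    (h : HasLowDegreeTrail G k m) :
    ∃ u v, ∃ w ∈ {w ∈ (⊤ : SimpleGraph V).finsetWalkLength k u v | w.IsTrail},
      (∀ e ∈ w.edges, e ∈ G.edgeSet) ∧ ∀ y ∈ ({u, v} : Finset V), (G.degree y : ℝ) ≤ m := by
  obtain ⟨u, v, q, hq, hlen, hu, hv⟩ := h
  refine ⟨u, v, q.mapLe le_top, ?_, fun e he ↦ ?_, by simp [hu, hv]⟩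
  · rw [mem_filter, mem_finsetWalkLength_iff, Walk.isTrail_mapLe]
    exact ⟨(Walk.length_map _ _).trans hlen, hq⟩
  · exact q.edges_subset_edgeSet (by rwa [Walk.edges_mapLe_eq_edges] at he)

lemma binomialRandom_real_hasLowDegreeTrail_le (p : I) {k : ℕ}
    (hk : ((k + 1 : ℕ) : ℝ) + 2 ≤ Fintype.card V / 50) :
    G(V, p).real {G | HasLowDegreeTrail G (k + 1) (Fintype.card V * p / 100)} ≤
      (Fintype.card V * p) ^ (k + 1) * (Real.exp (-(9 / 10 * (Fintype.card V * p))) +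
        Fintype.card V * Real.exp (-(9 / 10 * (Fintype.card V * p))) ^ 2) := by
  set N : ℝ := (Fintype.card V : ℝ) with hN
  set x : ℝ := Real.exp (-(9 / 10 * (N * p)))
  set W : ∀ u v : V, Finset ((⊤ : SimpleGraph V).Walk u v) := fun u v ↦
    {w ∈ (⊤ : SimpleGraph V).finsetWalkLength (k + 1) u v | w.IsTrail} with hW
  have hcover : {G : SimpleGraph V | HasLowDegreeTrail G (k + 1) (N * p / 100)} ⊆
      ⋃ u, ⋃ v, ⋃ w ∈ W u v, {G | (∀ e ∈ w.edges, e ∈ G.edgeSet) ∧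
        ∀ y ∈ ({u, v} : Finset V), (G.degree y : ℝ) ≤ N * p / 100} := by
    intro G hG
    obtain ⟨u, v, w, hw, hwG⟩ := HasLowDegreeTrail.exists_top_walk hG
    exact Set.mem_iUnion₂.2 ⟨u, v, Set.mem_biUnion hw hwG⟩
  have hp := p.2.1
  have hpair : ∀ u v : V, G(V, p).real (⋃ w ∈ W u v, {G | (∀ e ∈ w.edges, e ∈ G.edgeSet) ∧
      ∀ y ∈ ({u, v} : Finset V), (G.degree y : ℝ) ≤ N * p / 100}) ≤
        N ^ k * (p ^ (k + 1) * x ^ #{u, v}) := by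
    intro u v
    have hcard : #(W u v) ≤ Fintype.card V ^ k :=
      (card_filter_le _ _).trans (card_finsetWalkLength_succ_le ⊤ k u v)
    refine (measureReal_biUnion_finset_le _ _).trans <|
      (sum_le_card_nsmul _ _ (p ^ (k + 1) * x ^ #{u, v}) fun w hw ↦ ?_).trans ?_
    · rw [hW, mem_filter, mem_finsetWalkLength_iff] at hw
      rw [← hw.1] at hk ⊢
      exact binomialRandom_real_trail_and_degree_le p hw.2 hk
    · rw [nsmul_eq_mul]
      gcongr
      rw [hN]
      exact_mod_cast hcard
  calc G(V, p).real {G | HasLowDegreeTrail G (k + 1) (N * p / 100)}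
    _ ≤ ∑ u, ∑ v, N ^ k * (p ^ (k + 1) * x ^ #{u, v}) :=
      (measureReal_mono hcover).trans <| (measureReal_iUnion_fintype_le _).trans <|
        sum_le_sum fun u _ ↦ (measureReal_iUnion_fintype_le _).trans <|
          sum_le_sum fun v _ ↦ hpair u v
    _ = N ^ k * p ^ (k + 1) * ∑ u : V, ∑ v : V, x ^ #{u, v} := by
      simp only [mul_sum, mul_assoc]
    _ ≤ N ^ k * p ^ (k + 1) * (N * (x + N * x ^ 2)) := by
      gcongr
      exact sum_pow_card_pair_le x
    _ = (N * p) ^ (k + 1) * (x + N * x ^ 2) := by ring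

end LowDegree

lemma pow_le_exp_of_le_mul_div_log {c x y : ℝ} {k : ℕ} (hc : 0 ≤ c) (hx : Real.exp 1 ≤ x)
    (hxy : x ≤ y) (hk : k ≤ c * (x / Real.log x)) : y ^ k ≤ Real.exp (c * y) := by
  have hx0 : 0 < x := (Real.exp_pos 1).trans_le hx
  have hy0 : 0 < y := hx0.trans_le hxy
  have hlogx : 0 < Real.log x := Real.log_pos ((Real.one_lt_exp_iff.2 one_pos).trans_le hx)
  have hlogy : 0 < Real.log y := hlogx.trans_le (Real.log_le_log hx0 hxy)
  have hratio : x / Real.log x ≤ y / Real.log y := by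
    have h := Real.log_div_self_antitoneOn hx (hx.trans hxy) hxy
    simpa only [inv_div] using inv_anti₀ (by positivity) h
  rw [← Real.exp_log (pow_pos hy0 k), Real.log_pow, Real.exp_le_exp]
  calc (k : ℝ) * Real.log y
    _ ≤ c * (y / Real.log y) * Real.log y := by gcongr; exact hk.trans (by gcongr)
    _ = c * y := by field_simp

lemma pow_mul_exp_add_exp_sq_le {x y : ℝ} {k : ℕ} (hx : Real.exp 1 ≤ x) (hxy : x ≤ y)
    (hk : k ≤ 2 / 3 * (x / Real.log x)) :
    y ^ k * (Real.exp (-(9 / 10 * y)) + Real.exp x * Real.exp (-(9 / 10 * y)) ^ 2) ≤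
      2 * Real.exp (-(2 / 15 * x)) := by
  have hx0 : 0 < x := (Real.exp_pos 1).trans_le hx
  calc y ^ k * (Real.exp (-(9 / 10 * y)) + Real.exp x * Real.exp (-(9 / 10 * y)) ^ 2)
    _ ≤ Real.exp (2 / 3 * y) *
          (Real.exp (-(9 / 10 * y)) + Real.exp x * Real.exp (-(9 / 10 * y)) ^ 2) := by
      gcongr
      exact pow_le_exp_of_le_mul_div_log (by norm_num) hx hxy hk
    _ = Real.exp (-(7 / 30 * y)) + Real.exp (x - 17 / 15 * y) := by
      rw [mul_add, ← Real.exp_nat_mul, ← Real.exp_add, ← Real.exp_add, ← Real.exp_add]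
      push_cast
      ring_nf
    _ ≤ Real.exp (-(2 / 15 * x)) + Real.exp (-(2 / 15 * x)) := by
      exact add_le_add (Real.exp_le_exp.2 (by linarith)) (Real.exp_le_exp.2 (by linarith))
    _ = 2 * Real.exp (-(2 / 15 * x)) := by ring

lemma measureReal_exists_pos_le_le {Ω : Type*} [MeasurableSpace Ω] (μ : Measure Ω)
    [IsFiniteMeasure μ] (A : ℕ → Ω → Prop) {l ε : ℝ} (hl : 0 ≤ l) (hε : 0 ≤ ε)
    (hA : ∀ k : ℕ, 0 < k → k ≤ l → μ.real {ω | A k ω} ≤ ε) :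
    μ.real {ω | ∃ k : ℕ, 0 < k ∧ k ≤ l ∧ A k ω} ≤ l * ε := by
  have hcover : {ω | ∃ k : ℕ, 0 < k ∧ k ≤ l ∧ A k ω} ⊆ ⋃ k ∈ Ioc 0 ⌊l⌋₊, {ω | A k ω} := by
    rintro ω ⟨k, hk0, hkl, hω⟩
    exact Set.mem_biUnion (mem_coe.2 (mem_Ioc.2 ⟨hk0, Nat.le_floor hkl⟩)) hω
  calc μ.real {ω | ∃ k : ℕ, 0 < k ∧ k ≤ l ∧ A k ω}
    _ ≤ ∑ k ∈ Ioc 0 ⌊l⌋₊, μ.real {ω | A k ω} :=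
      (measureReal_mono hcover (measure_ne_top _ _)).trans (measureReal_biUnion_finset_le _ _)
    _ ≤ ⌊l⌋₊ * ε := by
      simpa using sum_le_card_nsmul (Ioc 0 ⌊l⌋₊) _ ε fun k hk ↦
        hA k (mem_Ioc.1 hk).1 ((Nat.le_floor_iff hl).1 (mem_Ioc.1 hk).2)
    _ ≤ l * ε := by
      gcongr
      exact Nat.floor_le hl

lemma binomialRandom_real_exists_hasLowDegreeTrail_le {V : Type*} [Fintype V] (p : I)
    (hp : Real.log (Fintype.card V) ≤ Fintype.card V * p)
    (hloglog : 1 ≤ Real.log (Real.log (Fintype.card V)))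
    (hlarge : Real.log (Fintype.card V) + 2 ≤ Fintype.card V / 50) :
    G(V, p).real {G | ∃ k : ℕ, 0 < k ∧
        k ≤ 2 * Real.log (Fintype.card V) / (3 * Real.log (Real.log (Fintype.card V))) ∧
        HasLowDegreeTrail G k (Fintype.card V * p / 100)} ≤
      Real.log (Fintype.card V) * (2 * Real.exp (-(2 / 15 * Real.log (Fintype.card V)))) := by
  set N : ℝ := (Fintype.card V : ℝ) with hN
  set x : ℝ := Real.log N with hx
  have hx_pos : 0 < x := (Real.log_natCast_nonneg _).lt_of_ne' fun h ↦ by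
    norm_num [show x = 0 from h] at hloglog
  have hx_exp : Real.exp 1 ≤ x := (Real.le_log_iff_exp_le hx_pos).1 hloglog
  have hexp_x : Real.exp x = N :=
    Real.exp_log ((Nat.cast_nonneg _).lt_of_ne' fun h ↦
      hx_pos.ne' (by rw [hx, hN, h, Real.log_zero]))
  have hlength : 2 * x / (3 * Real.log x) = 2 / 3 * (x / Real.log x) := by field_simp
  have hlength_le : 2 * x / (3 * Real.log x) ≤ x := by
    rw [div_le_iff₀ (by positivity)]
    nlinarith
  refine (measureReal_exists_pos_le_le _ _ (by positivity) (by positivity)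
    fun k hk0 hk ↦ ?_).trans (mul_le_mul_of_nonneg_right hlength_le (by positivity))
  obtain ⟨k, rfl⟩ := Nat.exists_eq_succ_of_ne_zero hk0.ne'
  refine (binomialRandom_real_hasLowDegreeTrail_le p (by linarith)).trans ?_
  rw [← hN]
  nth_rw 3 [← hexp_x]
  exact pow_mul_exp_add_exp_sq_le hx_exp hp (hk.trans_eq hlength)

section WHP

lemma gnpProb_eq_binomialRandom_real {n : ℕ} (p : I) (A : SimpleGraph (Fin n) → Prop) :
    gnpProb n p A = G(Fin n, p).real {G | A G} := by
  have hweight : ∀ G : SimpleGraph (Fin n), gnpWeight n p G = G(Fin n, p).real {G} := by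
    intro G
    rw [measureReal_def, binomialRandom_singleton, Set.ncard_eq_toFinset_card']
    simp [gnpWeight, edgeFinset]
  rw [gnpProb, ← sum_filter, ← coe_filter_univ, ← sum_measureReal_singleton]
  exact sum_congr rfl fun G _ ↦ hweight G

lemma WHP.of_compl_le {p : ℕ → ℝ} {A : ∀ n : ℕ, SimpleGraph (Fin n) → Prop} {ε : ℕ → ℝ}
    (hε : Tendsto ε atTop (nhds 0))
    (h : ∀ᶠ n in atTop, ∃ q : I, q = p n ∧ G(Fin n, q).real {G | ¬ A n G} ≤ ε n) : WHP p A := by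
  refine tendsto_of_tendsto_of_tendsto_of_le_of_le' (by simpa using hε.const_sub 1)
    tendsto_const_nhds ?_ ?_
  all_goals
    filter_upwards [h] with n ⟨q, hq, hA⟩
    rw [← hq, gnpProb_eq_binomialRandom_real]
  · have hcompl := probReal_compl_eq_one_sub (μ := G(Fin n, q))
      (Set.toFinite {G | A n G}).measurableSet
    rw [Set.compl_ofPred] at hcompl
    linarith
  · exact measureReal_le_one

lemma WHP.mono {p : ℕ → ℝ} {A B : ∀ n : ℕ, SimpleGraph (Fin n) → Prop} (hA : WHP p A)
    (hp : ∀ n, p n ∈ I) (hAB : ∀ n G, A n G → B n G) : WHP p B := by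
  refine tendsto_of_tendsto_of_tendsto_of_le_of_le hA tendsto_const_nhds (fun n ↦ ?_) fun n ↦ ?_
  all_goals
    lift p to ℕ → I using hp
    simp only [gnpProb_eq_binomialRandom_real]
  · exact measureReal_mono (hAB n)
  · exact measureReal_le_one

end WHP

section Asymptotics

lemma tendsto_log_natCast_atTop : Tendsto (fun n : ℕ ↦ Real.log n) atTop atTop :=
  Real.tendsto_log_atTop.comp tendsto_natCast_atTop_atTop

lemma eventually_log_add_le_div (a : ℝ) {c : ℝ} (hc : 0 < c) :
    ∀ᶠ y : ℝ in atTop, Real.log y + a ≤ y / c := by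
  have hlo : (fun y ↦ Real.log y + a) =o[atTop] (id : ℝ → ℝ) :=
    Real.isLittleO_log_id_atTop.add (Asymptotics.isLittleO_const_id_atTop a)
  filter_upwards [hlo.bound (inv_pos.2 hc), eventually_ge_atTop 0] with y hy hy0
  simpa [abs_of_nonneg hy0, div_eq_inv_mul] using (le_abs_self _).trans hy

lemma tendsto_mul_const_mul_exp_neg_atTop (a : ℝ) {b : ℝ} (hb : 0 < b) :
    Tendsto (fun x : ℝ ↦ x * (a * Real.exp (-(b * x)))) atTop (nhds 0) := by
  have h := (tendsto_rpow_mul_exp_neg_mul_atTop_nhds_zero 1 b hb).const_mul a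
  simp only [mul_zero, Real.rpow_one] at h
  exact h.congr fun x ↦ by ring_nf

end Asymptotics

theorem stmt10_general (p t : ℕ → ℝ) (hp1 : ∀ᶠ n in atTop, p n ≤ 1)
    (hp : ∀ᶠ n : ℕ in atTop, Real.log n / n ≤ p n)
    (ht : ∀ᶠ n : ℕ in atTop, t n ≤ n * p n / 100) :
    WHP p fun n G ↦ ∀ u ∈ lowDegSet n (t n) G, ∀ v ∈ lowDegSet n (t n) G,
      ∀ q : G.Walk u v, q.IsTrail → 0 < q.length →
        2 * Real.log n / (3 * Real.log (Real.log n)) < (q.length : ℝ) := by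
  refine WHP.of_compl_le ((tendsto_mul_const_mul_exp_neg_atTop 2 (b := 2 / 15) (by norm_num)).comp
    tendsto_log_natCast_atTop) ?_
  filter_upwards [hp1, hp, ht, eventually_gt_atTop 0,
    (Real.tendsto_log_atTop.comp tendsto_log_natCast_atTop).eventually_ge_atTop 1,
    tendsto_natCast_atTop_atTop.eventually (eventually_log_add_le_div 2 (c := 50) (by norm_num))]
    with n hp1 hp ht hn hloglog hlarge
  set q : I := ⟨p n, (div_nonneg (Real.log_natCast_nonneg n) n.cast_nonneg).trans hp, hp1⟩
  have hbound := binomialRandom_real_exists_hasLowDegreeTrail_le (V := Fin n) q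
  simp only [Fintype.card_fin] at hbound
  refine ⟨q, rfl, (measureReal_mono (fun G hG ↦ ?_) (measure_ne_top _ _)).trans
    (hbound ((div_le_iff₀' (by positivity)).1 hp) hloglog hlarge)⟩
  simp only [lowDegSet, mem_filter_univ, Set.mem_ofPred_eq, not_forall, not_lt] at hG
  obtain ⟨u, hu, v, hv, w, hw, hw0, hlen⟩ := hG
  exact ⟨w.length, hw0, hlen, u, v, w, hw, rfl, hu.le.trans ht, hv.le.trans ht⟩

/-- Claim 4.4: for `p ≥ ln n / n` and `t ≤ np/100`, w.h.p. `G ~ G(n,p)` contains no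
non-empty path of length at most `2 ln n / (3 ln ln n)` with both (possibly identical)
endpoints in `D_t(G)`. -/
theorem stmt10 (p : ℕ → ℝ) (t : ℕ → ℝ) (hp0 : ∀ n, 0 ≤ p n) (hp1 : ∀ n, p n ≤ 1)
    (hp : ∀ n : ℕ, Real.log n / n ≤ p n) (ht : ∀ n : ℕ, t n ≤ n * p n / 100) :
    WHP p (fun n G =>
      (∀ u ∈ lowDegSet n (t n) G, ∀ v ∈ lowDegSet n (t n) G,
        ∀ q : G.Walk u v, q.IsPath → 0 < q.length →
          2 * Real.log n / (3 * Real.log (Real.log n)) < (q.length : ℝ)) ∧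
      (∀ u ∈ lowDegSet n (t n) G, ∀ q : G.Walk u u, q.IsCycle →
        2 * Real.log n / (3 * Real.log (Real.log n)) < (q.length : ℝ))) := by
  refine (stmt10_general p t (.of_forall hp1) (.of_forall hp) (.of_forall ht)).mono
    (fun n ↦ ⟨hp0 n, hp1 n⟩) fun n G h ↦
      ⟨fun u hu v hv q hq ↦ h u hu v hv q hq.isTrail,
        fun u hu q hq ↦ h u hu u hu q hq.isTrail (by linarith [hq.three_le_length])⟩
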